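/- Let N ≥ 1, let Ω ⊂ ℝ^N be open, δ₀ > 0, and let v : Ω → ℝ be positive and twice continuously differentiable on S = {x ∈ Ω : 0 < v(x) < δ₀}, with |∇v(x)| = 1 and |Δv(x)| ≤ M on S for some M ≥ 0. Let q > 1, β ≥ 0 with q < β + 2, and set γ = (β − q + 2)/(q − 1). Assume h : [0,∞) → [0,∞) satisfies h(s) ≤ l₂·s^q for all s ≥ 0 with l₂ > 0; that 0 < b(x) ≤ b₂·v(x)^β on S with b₂ > 0; that 0 ≤ a(x) ≤ a₂·v(x)^α on S with a₂ > 0 and α > −2; and that f(x) ≥ 0 on S. Then for every constant C with 0 < C < (γ(γ+1)/(b₂·l₂·γ^q))^{1/(q−1)} there exists δ ∈ (0, δ₀] such that the function W(x) = C·v(x)^{−γ} satisfies −ΔW(x) + b(x)·h(|∇W(x)|) + a(x)·W(x) − f(x) ≤ 0 for every x ∈ Ω with 0 < v(x) < δ. -/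

import Mathlib

open Set

/-- The Laplacian of `f : ℝ^N → ℝ`, as the sum of the pure second derivatives in the
coordinate directions. -/
noncomputable def laplacian {N : ℕ} (f : EuclideanSpace ℝ (Fin N) → ℝ)
    (x : EuclideanSpace ℝ (Fin N)) : ℝ :=
  ∑ i : Fin N, fderiv ℝ (fun y => fderiv ℝ f y (EuclideanSpace.single i 1)) x
    (EuclideanSpace.single i 1)

/-!
Applied to `W = C v^{-γ}`, each of the three terms of the operator carries the factor
`C v^{-γ-2}`: the Laplacian contributes `γ(γ+1) |∇v|² - γ v Δv`; the gradient term at most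
`b₂ l₂ γ^q C^{q-1}`, since `γ` is chosen so that `β - (γ+1) q = -γ - 2`; the reaction term at most
`a₂ v^{α+2}`. The bound on `C` says `b₂ l₂ γ^q C^{q-1} < γ(γ+1)`, and the remaining terms
`γ M v + a₂ v^{α+2}` tend to `0` with `v`, so they are absorbed by this gap near `v = 0`.
-/

open Filter Topology

section Gradient

variable {𝕜 E : Type*} [RCLike 𝕜] [NormedAddCommGroup E] [InnerProductSpace 𝕜 E] [CompleteSpace E]
  {v : E → 𝕜} {x : E}

theorem differentiableAt_of_gradient_ne_zero (hx : gradient v x ≠ 0) : DifferentiableAt 𝕜 v x :=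
  not_imp_comm.mp gradient_eq_zero_of_not_differentiableAt hx

theorem norm_gradient_eq_norm_fderiv : ‖gradient v x‖ = ‖fderiv 𝕜 v x‖ :=
  LinearIsometryEquiv.norm_map _ _

theorem sum_sq_norm_fderiv_orthonormalBasis {ι : Type*} [Fintype ι] (e : OrthonormalBasis ι 𝕜 E) :
    ∑ i, ‖fderiv 𝕜 v x (e i)‖ ^ 2 = ‖gradient v x‖ ^ 2 := by
  simpa only [inner_gradient_left] using e.sum_sq_norm_inner_left (gradient v x)

theorem norm_gradient_comp {φ : 𝕜 → 𝕜} {c : 𝕜} (hv : DifferentiableAt 𝕜 v x)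
    (hφ : HasDerivAt φ c (v x)) :
    ‖gradient (fun y => φ (v y)) x‖ = ‖c‖ * ‖gradient v x‖ := by
  have hfderiv : fderiv 𝕜 (fun y => φ (v y)) x = c • fderiv 𝕜 v x :=
    (hφ.comp_hasFDerivAt x hv.hasFDerivAt).fderiv
  rw [norm_gradient_eq_norm_fderiv, norm_gradient_eq_norm_fderiv, hfderiv, norm_smul]

end Gradient

section ChainRule

theorem fderiv_fderiv_comp_apply {𝕜 E : Type*} [NontriviallyNormedField 𝕜] [NormedAddCommGroup E]
    [NormedSpace 𝕜 E] {v : E → 𝕜} {x : E} {φ φ' : 𝕜 → 𝕜} {c : 𝕜} (hv : ContDiffAt 𝕜 2 v x)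
    (hφ : ∀ᶠ t in 𝓝 (v x), HasDerivAt φ (φ' t) t) (hφ' : HasDerivAt φ' c (v x)) (e₁ e₂ : E) :
    fderiv 𝕜 (fun y => fderiv 𝕜 (fun z => φ (v z)) y e₁) x e₂
      = φ' (v x) * fderiv 𝕜 (fun y => fderiv 𝕜 v y e₁) x e₂
        + c * (fderiv 𝕜 v x e₁ * fderiv 𝕜 v x e₂) := by
  have hdiff : ∀ᶠ y in 𝓝 x, DifferentiableAt 𝕜 v y :=
    (hv.eventually (by simp)).mono fun y hy => hy.differentiableAt (by simp)
  have hfirst : (fun y => fderiv 𝕜 (fun z => φ (v z)) y e₁) =ᶠ[𝓝 x]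
      fun y => φ' (v y) * fderiv 𝕜 v y e₁ := by
    filter_upwards [hdiff, hv.continuousAt.eventually hφ] with y hvy hφy
    exact DFunLike.congr_fun (hφy.comp_hasFDerivAt y hvy.hasFDerivAt).fderiv e₁
  have hφ'v : HasFDerivAt (fun y => φ' (v y)) (c • fderiv 𝕜 v x) x :=
    hφ'.comp_hasFDerivAt x hdiff.self_of_nhds.hasFDerivAt
  have hdv : DifferentiableAt 𝕜 (fun y => fderiv 𝕜 v y e₁) x :=
    ((hv.fderiv_right (m := 1) (by norm_num)).differentiableAt (by simp)).clm_apply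
      (differentiableAt_const e₁)
  rw [hfirst.fderiv_eq, (hφ'v.fun_mul hdv.hasFDerivAt).fderiv]
  simp only [add_apply, smul_apply, smul_eq_mul]
  ring

variable {N : ℕ} {v : EuclideanSpace ℝ (Fin N) → ℝ} {x : EuclideanSpace ℝ (Fin N)}

theorem laplacian_comp {φ φ' : ℝ → ℝ} {c : ℝ} (hv : ContDiffAt ℝ 2 v x)
    (hφ : ∀ᶠ t in 𝓝 (v x), HasDerivAt φ (φ' t) t) (hφ' : HasDerivAt φ' c (v x)) :
    laplacian (fun y => φ (v y)) x = φ' (v x) * laplacian v x + c * ‖gradient v x‖ ^ 2 := by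
  have hnorm := sum_sq_norm_fderiv_orthonormalBasis (v := v) (x := x)
    (EuclideanSpace.basisFun (Fin N) ℝ)
  simp only [EuclideanSpace.basisFun_apply, Real.norm_eq_abs, sq_abs] at hnorm
  simp only [laplacian, fderiv_fderiv_comp_apply hv hφ hφ', ← hnorm, Finset.sum_add_distrib,
    Finset.mul_sum, sq]

theorem hasDerivAt_const_mul_rpow (C p : ℝ) {t : ℝ} (ht : t ≠ 0) :
    HasDerivAt (fun s : ℝ => C * s ^ p) (C * p * t ^ (p - 1)) t := by
  simpa only [mul_assoc] using (Real.hasDerivAt_rpow_const (p := p) (Or.inl ht)).const_mul C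

theorem laplacian_const_mul_rpow (C p : ℝ) (hv : ContDiffAt ℝ 2 v x) (hx : v x ≠ 0) :
    laplacian (fun y => C * v y ^ p) x
      = C * p * v x ^ (p - 1) * laplacian v x
        + C * p * (p - 1) * v x ^ (p - 2) * ‖gradient v x‖ ^ 2 := by
  have hφ : ∀ᶠ t in 𝓝 (v x), HasDerivAt (fun s => C * s ^ p) (C * p * t ^ (p - 1)) t :=
    (eventually_ne_nhds hx).mono fun t ht => hasDerivAt_const_mul_rpow C p ht
  have hφ' := hasDerivAt_const_mul_rpow (C * p) (p - 1) hx
  rw [laplacian_comp hv hφ hφ', sub_sub, one_add_one_eq_two]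

end ChainRule

theorem exists_mem_Ioc_forall_mul_add_mul_rpow_lt (A B : ℝ) {p K δ₀ : ℝ} (hp : 0 < p) (hK : 0 < K)
    (hδ₀ : 0 < δ₀) : ∃ δ ∈ Ioc 0 δ₀, ∀ t ∈ Ioo 0 δ, A * t + B * t ^ p < K := by
  have hcont : ContinuousAt (fun t : ℝ => A * t + B * t ^ p) 0 :=
    (continuousAt_const.mul continuousAt_id).add
      (continuousAt_const.mul (Real.continuousAt_rpow_const 0 p (Or.inr hp.le)))
  have hlt : ∀ᶠ t in 𝓝 (0 : ℝ), A * t + B * t ^ p < K :=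
    hcont.eventually_lt_const (by simpa [Real.zero_rpow hp.ne'] using hK)
  exact (mem_nhdsGT_iff_exists_mem_Ioc_Ioo_subset hδ₀).mp (mem_nhdsWithin_of_mem_nhds hlt)

theorem mul_rpow_lt_of_lt_div_rpow_one_div {A B C p : ℝ} (hA : 0 ≤ A) (hB : 0 < B) (hC : 0 ≤ C)
    (hp : 0 < p) (h : C < (A / B) ^ (1 / p)) : B * C ^ p < A := by
  rwa [one_div, Real.lt_rpow_inv_iff_of_pos hC (div_nonneg hA hB.le) hp, lt_div_iff₀' hB] at h

section Barrier

theorem rpow_mul_barrier_slope_rpow {q β γ C t : ℝ} (hγ : 0 ≤ γ) (hγq : γ * (q - 1) = β - q + 2)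
    (hC : 0 < C) (ht : 0 < t) :
    t ^ β * (C * γ * t ^ (-γ - 1)) ^ q = C * t ^ (-γ - 2) * (γ ^ q * C ^ (q - 1)) := by
  have hexp : -γ - 2 = β + (-γ - 1) * q := by linear_combination hγq
  rw [Real.mul_rpow (by positivity) (by positivity), Real.mul_rpow hC.le hγ, ← Real.rpow_mul ht.le,
    hexp, Real.rpow_add ht, Real.rpow_sub_one hC.ne']
  field_simp

variable {N : ℕ} {v : EuclideanSpace ℝ (Fin N) → ℝ} {x : EuclideanSpace ℝ (Fin N)} {γ C : ℝ}

theorem neg_laplacian_barrier_le {M : ℝ} (hv : ContDiffAt ℝ 2 v x) (hx : 0 < v x)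
    (hgrad : ‖gradient v x‖ = 1) (hlap : laplacian v x ≤ M) (hγ : 0 ≤ γ) (hC : 0 ≤ C) :
    -laplacian (fun y => C * v y ^ (-γ)) x
      ≤ C * v x ^ (-γ - 2) * (γ * M * v x - γ * (γ + 1)) := by
  have hpow : v x ^ (-γ - 1) = v x ^ (-γ - 2) * v x := by
    rw [← Real.rpow_add_one hx.ne']
    ring_nf
  calc -laplacian (fun y => C * v y ^ (-γ)) x
      = C * v x ^ (-γ - 2) * (γ * laplacian v x * v x - γ * (γ + 1)) := by
        rw [laplacian_const_mul_rpow C (-γ) hv hx.ne', hgrad, hpow]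
        ring
    _ ≤ C * v x ^ (-γ - 2) * (γ * M * v x - γ * (γ + 1)) := by gcongr

theorem norm_gradient_barrier (hx : 0 < v x) (hgrad : ‖gradient v x‖ = 1) (hγ : 0 ≤ γ)
    (hC : 0 ≤ C) : ‖gradient (fun y => C * v y ^ (-γ)) x‖ = C * γ * v x ^ (-γ - 1) := by
  have hdiff : DifferentiableAt ℝ v x :=
    differentiableAt_of_gradient_ne_zero (norm_ne_zero_iff.mp (hgrad ▸ one_ne_zero))
  rw [norm_gradient_comp hdiff (hasDerivAt_const_mul_rpow C (-γ) hx.ne'), hgrad, mul_one, mul_neg,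
    neg_mul, norm_neg, Real.norm_of_nonneg (by positivity)]

theorem gradient_term_barrier_le {q β b b₂ l₂ : ℝ} {h : ℝ → ℝ} (hx : 0 < v x)
    (hgrad : ‖gradient v x‖ = 1) (hγ : 0 ≤ γ) (hγq : γ * (q - 1) = β - q + 2) (hC : 0 < C)
    (hl₂ : 0 ≤ l₂) (hh : ∀ s, 0 ≤ s → h s ≤ l₂ * s ^ q) (hb₀ : 0 ≤ b) (hb : b ≤ b₂ * v x ^ β) :
    b * h ‖gradient (fun y => C * v y ^ (-γ)) x‖
      ≤ C * v x ^ (-γ - 2) * (b₂ * l₂ * γ ^ q * C ^ (q - 1)) := by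
  rw [norm_gradient_barrier hx hgrad hγ hC.le]
  have hslope : 0 ≤ C * γ * v x ^ (-γ - 1) := by positivity
  calc b * h (C * γ * v x ^ (-γ - 1))
      ≤ b * (l₂ * (C * γ * v x ^ (-γ - 1)) ^ q) := by gcongr; exact hh _ hslope
    _ ≤ b₂ * v x ^ β * (l₂ * (C * γ * v x ^ (-γ - 1)) ^ q) := by gcongr
    _ = b₂ * l₂ * (v x ^ β * (C * γ * v x ^ (-γ - 1)) ^ q) := by ring
    _ = C * v x ^ (-γ - 2) * (b₂ * l₂ * γ ^ q * C ^ (q - 1)) := by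
        rw [rpow_mul_barrier_slope_rpow hγ hγq hC hx]
        ring

theorem reaction_term_barrier_le {a a₂ α t : ℝ} (hC : 0 ≤ C) (ht : 0 < t) (ha : a ≤ a₂ * t ^ α) :
    a * (C * t ^ (-γ)) ≤ C * t ^ (-γ - 2) * (a₂ * t ^ (α + 2)) := by
  have hpow : t ^ α * t ^ (-γ) = t ^ (-γ - 2) * t ^ (α + 2) := by
    rw [← Real.rpow_add ht, ← Real.rpow_add ht]
    ring_nf
  calc a * (C * t ^ (-γ)) ≤ a₂ * t ^ α * (C * t ^ (-γ)) := by gcongr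
    _ = C * t ^ (-γ - 2) * (a₂ * t ^ (α + 2)) := by linear_combination a₂ * C * hpow

end Barrier

theorem subsolution_barrier_gradient_dominant_general {N : ℕ}
    {Ω : Set (EuclideanSpace ℝ (Fin N))} (hΩ : IsOpen Ω) {δ₀ : ℝ} (hδ₀ : 0 < δ₀)
    {v : EuclideanSpace ℝ (Fin N) → ℝ} {M : ℝ}
    (hv : ContDiffOn ℝ 2 v {x ∈ Ω | 0 < v x ∧ v x < δ₀})
    (hgrad : ∀ x ∈ {x ∈ Ω | 0 < v x ∧ v x < δ₀}, ‖gradient v x‖ = 1)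
    (hlap : ∀ x ∈ {x ∈ Ω | 0 < v x ∧ v x < δ₀}, laplacian v x ≤ M)
    {q β γ : ℝ} (hq : 1 < q) (hqβ : q < β + 2) (hγ : γ = (β - q + 2) / (q - 1))
    {h : ℝ → ℝ} {l₂ : ℝ} (hl₂ : 0 < l₂) (hh : ∀ s, 0 ≤ s → h s ≤ l₂ * s ^ q)
    {a b f : EuclideanSpace ℝ (Fin N) → ℝ} {b₂ : ℝ} (hb₂ : 0 < b₂)
    (hb : ∀ x ∈ {x ∈ Ω | 0 < v x ∧ v x < δ₀}, 0 ≤ b x ∧ b x ≤ b₂ * v x ^ β)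
    {a₂ α : ℝ} (hα : -2 < α) (ha : ∀ x ∈ {x ∈ Ω | 0 < v x ∧ v x < δ₀}, a x ≤ a₂ * v x ^ α)
    (hf : ∀ x ∈ {x ∈ Ω | 0 < v x ∧ v x < δ₀}, 0 ≤ f x)
    {C : ℝ} (hC₀ : 0 < C) (hC : C < (γ * (γ + 1) / (b₂ * l₂ * γ ^ q)) ^ (1 / (q - 1))) :
    ∃ δ : ℝ, 0 < δ ∧ δ ≤ δ₀ ∧ ∀ x ∈ Ω, 0 < v x → v x < δ →
      -laplacian (fun y => C * v y ^ (-γ)) x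
        + b x * h ‖gradient (fun y => C * v y ^ (-γ)) x‖
        + a x * (C * v x ^ (-γ)) - f x ≤ 0 := by
  have hq₁ : 0 < q - 1 := sub_pos.mpr hq
  have hγ₀ : 0 < γ := hγ ▸ div_pos (by linarith) hq₁
  have hγq : γ * (q - 1) = β - q + 2 := (eq_div_iff hq₁.ne').mp hγ
  have hgap : b₂ * l₂ * γ ^ q * C ^ (q - 1) < γ * (γ + 1) :=
    mul_rpow_lt_of_lt_div_rpow_one_div (by positivity) (by positivity) hC₀.le hq₁ hC
  obtain ⟨δ, ⟨hδ, hδδ₀⟩, hsmall⟩ := exists_mem_Ioc_forall_mul_add_mul_rpow_lt (γ * M) a₂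
    (neg_lt_iff_pos_add.mp hα) (sub_pos.mpr hgap) hδ₀
  refine ⟨δ, hδ, hδδ₀, fun x hxΩ hx hxδ => ?_⟩
  have hxS : x ∈ {x ∈ Ω | 0 < v x ∧ v x < δ₀} := ⟨hxΩ, hx, hxδ.trans_le hδδ₀⟩
  have hcont : ContinuousAt v x := (differentiableAt_of_gradient_ne_zero
    (norm_ne_zero_iff.mp (hgrad x hxS ▸ one_ne_zero))).continuousAt
  have hvx : ContDiffAt ℝ 2 v x :=
    hv.contDiffAt (inter_mem (hΩ.mem_nhds hxΩ) (hcont (Ioo_mem_nhds hx hxS.2.2)))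
  have hdiffusion := neg_laplacian_barrier_le hvx hx (hgrad x hxS) (hlap x hxS) hγ₀.le hC₀.le
  have hgradient := gradient_term_barrier_le hx (hgrad x hxS) hγ₀.le hγq hC₀ hl₂.le hh
    (hb x hxS).1 (hb x hxS).2
  have hreaction := reaction_term_barrier_le (γ := γ) hC₀.le hx (ha x hxS)
  have habsorb : C * v x ^ (-γ - 2) * (γ * M * v x + a₂ * v x ^ (α + 2))
      < C * v x ^ (-γ - 2) * (γ * (γ + 1) - b₂ * l₂ * γ ^ q * C ^ (q - 1)) :=
    mul_lt_mul_of_pos_left (hsmall (v x) ⟨hx, hxδ⟩) (by positivity)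
  linarith [hf x hxS]

/-- subsolution barrier in the gradient-dominant regime `q < β + 2`.
With `γ = (β − q + 2)/(q − 1)`, `h(s) ≤ l₂·s^q`, `0 < b ≤ b₂·v^β`,
`0 ≤ a ≤ a₂·v^α` with `α > −2`, and `f ≥ 0` on the collar
`S = {x ∈ Ω : 0 < v(x) < δ₀}` where `|∇v| = 1` and `|Δv| ≤ M`, for every
`C` with `0 < C < (γ(γ+1)/(b₂·l₂·γ^q))^{1/(q−1)}` the function `W = C·v^{−γ}` satisfies
`−ΔW + b·h(|∇W|) + a·W − f ≤ 0` on `{0 < v < δ}` for some `δ ∈ (0, δ₀]`. -/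
theorem subsolution_barrier_gradient_dominant {N : ℕ} (hN : 1 ≤ N)
    (Ω : Set (EuclideanSpace ℝ (Fin N))) (hΩ : IsOpen Ω)
    (δ₀ : ℝ) (hδ₀ : 0 < δ₀)
    (v : EuclideanSpace ℝ (Fin N) → ℝ) (M : ℝ) (hM : 0 ≤ M)
    (hv : ContDiffOn ℝ 2 v {x ∈ Ω | 0 < v x ∧ v x < δ₀})
    (hgrad : ∀ x ∈ {x ∈ Ω | 0 < v x ∧ v x < δ₀}, ‖gradient v x‖ = 1)
    (hlap : ∀ x ∈ {x ∈ Ω | 0 < v x ∧ v x < δ₀}, |laplacian v x| ≤ M)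
    (q β : ℝ) (hq : 1 < q) (hβ : 0 ≤ β) (hqβ : q < β + 2)
    (γ : ℝ) (hγ : γ = (β - q + 2) / (q - 1))
    (h : ℝ → ℝ) (l₂ : ℝ) (hl₂ : 0 < l₂)
    (hhnn : ∀ s : ℝ, 0 ≤ s → 0 ≤ h s)
    (hh : ∀ s : ℝ, 0 ≤ s → h s ≤ l₂ * s ^ q)
    (a b f : EuclideanSpace ℝ (Fin N) → ℝ) (b₂ : ℝ) (hb₂ : 0 < b₂)
    (hbv : ∀ x ∈ {x ∈ Ω | 0 < v x ∧ v x < δ₀}, 0 < b x ∧ b x ≤ b₂ * v x ^ β)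
    (a₂ α : ℝ) (ha₂ : 0 < a₂) (hα : -2 < α)
    (ha : ∀ x ∈ {x ∈ Ω | 0 < v x ∧ v x < δ₀}, 0 ≤ a x ∧ a x ≤ a₂ * v x ^ α)
    (hf : ∀ x ∈ {x ∈ Ω | 0 < v x ∧ v x < δ₀}, 0 ≤ f x)
    (C : ℝ) (hC₀ : 0 < C) (hC : C < (γ * (γ + 1) / (b₂ * l₂ * γ ^ q)) ^ (1 / (q - 1))) :
    ∃ δ : ℝ, 0 < δ ∧ δ ≤ δ₀ ∧ ∀ x ∈ Ω, 0 < v x → v x < δ →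
      -laplacian (fun y => C * v y ^ (-γ)) x
        + b x * h ‖gradient (fun y => C * v y ^ (-γ)) x‖
        + a x * (C * v x ^ (-γ)) - f x ≤ 0 := by
  exact subsolution_barrier_gradient_dominant_general hΩ hδ₀ hv hgrad
    (fun x hx => (abs_le.mp (hlap x hx)).2) hq hqβ hγ hl₂ hh hb₂
    (fun x hx => (hbv x hx).imp_left le_of_lt) hα (fun x hx => (ha x hx).2) hf hC₀ hC
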